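/- arXiv:2003.06049 — 13 statements merged into one kernel-verified Lean document; each statement's English description precedes it below -/
import Mathlib

section
/- Let A ∈ ℂ^{n×n}, B ∈ ℂ^{n×1}, S ∈ ℂ^{ν×ν}, L ∈ ℂ^{1×ν}, and let Π ∈ ℂ^{n×ν} satisfy the Sylvester equation AΠ + BL = ΠS. Let Q_P ∈ ℂ^{ℓ×ℓ}, R_P ∈ ℂ^{ℓ×1}, C_P ∈ ℂ^{1×n} and Υ_P ∈ ℂ^{ℓ×n} satisfy Q_P Υ_P = Υ_P A + R_P C_P and C_P Π = 0. If G ∈ ℂ^{ν×1} satisfies Υ_P Π G = Υ_P B, then (Υ_P Π)(S − G L) = Q_P (Υ_P Π). -/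
open Matrix

/-- If `G` satisfies `Υp Π G = Υp B`, then `(Υp Π)(S − G L) = Qp (Υp Π)`. -/
theorem stmt_0 {n ν ℓ : ℕ}
    (A : Matrix (Fin n) (Fin n) ℂ) (B : Matrix (Fin n) (Fin 1) ℂ)
    (S : Matrix (Fin ν) (Fin ν) ℂ) (L : Matrix (Fin 1) (Fin ν) ℂ)
    (Pm : Matrix (Fin n) (Fin ν) ℂ)
    (hPm : A * Pm + B * L = Pm * S)
    (Qp : Matrix (Fin ℓ) (Fin ℓ) ℂ) (Rp : Matrix (Fin ℓ) (Fin 1) ℂ)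
    (Cp : Matrix (Fin 1) (Fin n) ℂ) (Υp : Matrix (Fin ℓ) (Fin n) ℂ)
    (hΥp : Qp * Υp = Υp * A + Rp * Cp)
    (hCp : Cp * Pm = 0)
    (G : Matrix (Fin ν) (Fin 1) ℂ)
    (hG : Υp * Pm * G = Υp * B) :
    (Υp * Pm) * (S - G * L) = Qp * (Υp * Pm) := by
  rw [Matrix.mul_sub, ← Matrix.mul_assoc (Υp * Pm) G L, hG, Matrix.mul_assoc Υp Pm S, ← hPm,
    ← Matrix.mul_assoc Qp, hΥp, Matrix.add_mul, Matrix.mul_assoc Rp, hCp, Matrix.mul_zero,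
    add_zero, Matrix.mul_add, Matrix.mul_assoc Υp B L, Matrix.mul_assoc Υp A Pm,
    add_sub_cancel_right]
end

section
/- Let A ∈ ℂ^{n×n}, B ∈ ℂ^{n×1}, S ∈ ℂ^{ν×ν}, L ∈ ℂ^{1×ν}, and let Π ∈ ℂ^{n×ν} satisfy AΠ + BL = ΠS. Let Q_P ∈ ℂ^{ℓ×ℓ}, R_P ∈ ℂ^{ℓ×1}, C_P ∈ ℂ^{1×n} and Υ_P ∈ ℂ^{ℓ×n} satisfy Q_P Υ_P = Υ_P A + R_P C_P and C_P Π = 0, and assume rank(Υ_P Π) = ℓ. If G ∈ ℂ^{ν×1} satisfies Υ_P Π G = Υ_P B, then every eigenvalue of Q_P is an eigenvalue of S − G L (i.e., σ(Q_P) ⊆ σ(S − GL)). -/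
open Matrix

/-- Pole placement: if `rank (Υp Π) = ℓ` and `Υp Π G = Υp B`, then
`σ(Qp) ⊆ σ(S − G L)`. -/
theorem stmt_1 {n ν ℓ : ℕ}
    (A : Matrix (Fin n) (Fin n) ℂ) (B : Matrix (Fin n) (Fin 1) ℂ)
    (S : Matrix (Fin ν) (Fin ν) ℂ) (L : Matrix (Fin 1) (Fin ν) ℂ)
    (Pm : Matrix (Fin n) (Fin ν) ℂ)
    (hPm : A * Pm + B * L = Pm * S)
    (Qp : Matrix (Fin ℓ) (Fin ℓ) ℂ) (Rp : Matrix (Fin ℓ) (Fin 1) ℂ)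
    (Cp : Matrix (Fin 1) (Fin n) ℂ) (Υp : Matrix (Fin ℓ) (Fin n) ℂ)
    (hΥp : Qp * Υp = Υp * A + Rp * Cp)
    (hCp : Cp * Pm = 0)
    (hrank : (Υp * Pm).rank = ℓ)
    (G : Matrix (Fin ν) (Fin 1) ℂ)
    (hG : Υp * Pm * G = Υp * B) :
    spectrum ℂ Qp ⊆ spectrum ℂ (S - G * L) := by
  have hQM : Qp * (Υp * Pm) = (Υp * Pm) * (S - G * L) := by
    have h1 : A * Pm = Pm * S - B * L := eq_sub_of_add_eq hPm
    rw [← Matrix.mul_assoc, hΥp, Matrix.add_mul, Matrix.mul_assoc Rp, hCp, Matrix.mul_zero,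
      add_zero, Matrix.mul_assoc, h1, Matrix.mul_sub, Matrix.mul_sub, ← Matrix.mul_assoc _ G L,
      hG, Matrix.mul_assoc, Matrix.mul_assoc]
  have hsurj : Function.Surjective (Υp * Pm).mulVec := by
    have h : LinearMap.range (Υp * Pm).mulVecLin = ⊤ := by
      apply Submodule.eq_top_of_finrank_eq
      have h2 : Module.finrank ℂ (LinearMap.range (Υp * Pm).mulVecLin) = ℓ := hrank
      rw [h2]
      simp
    exact LinearMap.range_eq_top.mp h
  obtain ⟨N, hN⟩ := Matrix.mulVec_surjective_iff_exists_right_inverse.mp hsurj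
  intro z hz hT
  apply hz
  obtain ⟨X, hX⟩ := hT.exists_right_inv
  have hc : (algebraMap ℂ (Matrix (Fin ℓ) (Fin ℓ) ℂ) z - Qp) * (Υp * Pm)
      = (Υp * Pm) * (algebraMap ℂ (Matrix (Fin ν) (Fin ν) ℂ) z - (S - G * L)) := by
    rw [Matrix.sub_mul, Matrix.mul_sub _ _ (S - G * L), hQM]
    simp [Algebra.algebraMap_eq_smul_one]
  have hone : (algebraMap ℂ (Matrix (Fin ℓ) (Fin ℓ) ℂ) z - Qp) * ((Υp * Pm) * X * N) = 1 := by
    rw [← Matrix.mul_assoc, ← Matrix.mul_assoc, hc, Matrix.mul_assoc (Υp * Pm) _ X, hX,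
      Matrix.mul_one, hN]
  exact IsUnit.of_mul_eq_one _ hone
end

section
/- Let A ∈ ℂ^{n×n}, B ∈ ℂ^{n×1}, S ∈ ℂ^{ν×ν}, L ∈ ℂ^{1×ν}, and let Π ∈ ℂ^{n×ν} satisfy AΠ + BL = ΠS. Let Q_P ∈ ℂ^{ν×ν}, R_P ∈ ℂ^{ν×1}, C_P ∈ ℂ^{1×n} and Υ_P ∈ ℂ^{ν×n} satisfy Q_P Υ_P = Υ_P A + R_P C_P and C_P Π = 0, and assume Υ_P Π ∈ ℂ^{ν×ν} is invertible. If G = (Υ_P Π)^{-1} Υ_P B, then S − G L = (Υ_P Π)^{-1} Q_P (Υ_P Π); in particular S − GL is similar to Q_P. -/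
open Matrix

/-- Full pole assignment: if `Υp Π` is invertible and `G = (Υp Π)⁻¹ Υp B`, then
`S − G L = (Υp Π)⁻¹ Qp (Υp Π)`, i.e. `S − GL` is similar to `Qp`. -/
theorem stmt_2 {n ν : ℕ}
    (A : Matrix (Fin n) (Fin n) ℂ) (B : Matrix (Fin n) (Fin 1) ℂ)
    (S : Matrix (Fin ν) (Fin ν) ℂ) (L : Matrix (Fin 1) (Fin ν) ℂ)
    (Pm : Matrix (Fin n) (Fin ν) ℂ)
    (hPm : A * Pm + B * L = Pm * S)
    (Qp : Matrix (Fin ν) (Fin ν) ℂ) (Rp : Matrix (Fin ν) (Fin 1) ℂ)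
    (Cp : Matrix (Fin 1) (Fin n) ℂ) (Υp : Matrix (Fin ν) (Fin n) ℂ)
    (hΥp : Qp * Υp = Υp * A + Rp * Cp)
    (hCp : Cp * Pm = 0)
    (hinv : IsUnit (Υp * Pm))
    (G : Matrix (Fin ν) (Fin 1) ℂ)
    (hG : G = (Υp * Pm)⁻¹ * (Υp * B)) :
    S - G * L = (Υp * Pm)⁻¹ * Qp * (Υp * Pm) := by
  have hdet : IsUnit (Υp * Pm).det := (Matrix.isUnit_iff_isUnit_det _).mp hinv
  have h1 : Qp * (Υp * Pm) = Υp * (A * Pm) := by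
    rw [← Matrix.mul_assoc, hΥp, Matrix.add_mul, Matrix.mul_assoc Rp, hCp, Matrix.mul_zero,
      add_zero, Matrix.mul_assoc]
  have h2 : A * Pm = Pm * S - B * L := eq_sub_of_add_eq hPm
  rw [Matrix.mul_assoc, h1, h2, Matrix.mul_sub, Matrix.mul_sub, hG, ← Matrix.mul_assoc Υp Pm S,
    Matrix.nonsing_inv_mul_cancel_left _ _ hdet, Matrix.mul_assoc _ (Υp * B) L,
    Matrix.mul_assoc Υp B L]
end

section
/- Let A ∈ ℂ^{n×n}, B ∈ ℂ^{n×1}, C ∈ ℂ^{1×n}, S ∈ ℂ^{ν×ν}, L ∈ ℂ^{1×ν} with L ≠ 0, S_D ∈ ℂ^{μ×μ}, R ∈ ℂ^{μ×1}, and G ∈ ℂ^{ν×1}. Let Π ∈ ℂ^{n×ν} satisfy AΠ + BL = ΠS and let Υ_D ∈ ℂ^{μ×n} satisfy S_D Υ_D = Υ_D A + R C. Then the matrix P = Υ_D Π satisfies the reduced-order Sylvester equation S_D P = P(S − GL) + R(CΠ) if and only if Υ_D Π G = Υ_D B. -/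
open Matrix

/-- `P = Υd Π` satisfies the reduced-order Sylvester equation
`S_D P = P(S − GL) + R(CΠ)` iff `Υd Π G = Υd B`. -/
theorem stmt_6 {n ν μ : ℕ}
    (A : Matrix (Fin n) (Fin n) ℂ) (B : Matrix (Fin n) (Fin 1) ℂ)
    (C : Matrix (Fin 1) (Fin n) ℂ)
    (S : Matrix (Fin ν) (Fin ν) ℂ) (L : Matrix (Fin 1) (Fin ν) ℂ)
    (hL : L ≠ 0)
    (SD : Matrix (Fin μ) (Fin μ) ℂ) (R : Matrix (Fin μ) (Fin 1) ℂ)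
    (G : Matrix (Fin ν) (Fin 1) ℂ)
    (Pm : Matrix (Fin n) (Fin ν) ℂ)
    (hPm : A * Pm + B * L = Pm * S)
    (Υd : Matrix (Fin μ) (Fin n) ℂ)
    (hΥd : SD * Υd = Υd * A + R * C) :
    SD * (Υd * Pm) = (Υd * Pm) * (S - G * L) + R * (C * Pm)
      ↔ Υd * Pm * G = Υd * B := by
  have h1 : SD * (Υd * Pm) = Υd * (A * Pm) + R * (C * Pm) := by
    rw [← Matrix.mul_assoc, hΥd, Matrix.add_mul, Matrix.mul_assoc, Matrix.mul_assoc]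
  have h2 : (Υd * Pm) * (S - G * L) + R * (C * Pm)
      = Υd * (A * Pm) + R * (C * Pm) + (Υd * B - Υd * Pm * G) * L := by
    rw [Matrix.mul_sub, Matrix.mul_assoc Υd Pm S, ← hPm, Matrix.mul_add, Matrix.sub_mul,
      ← Matrix.mul_assoc (Υd * Pm) G L, ← Matrix.mul_assoc Υd B L]
    abel
  rw [h1, h2]
  constructor
  · intro h
    have h3 : (Υd * B - Υd * Pm * G) * L = 0 := by
      simpa using h
    obtain ⟨j, hj⟩ : ∃ j, L 0 j ≠ 0 := by
      by_contra! hc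
      apply hL
      ext i j
      rw [Subsingleton.elim i 0]
      exact hc j
    symm
    rw [← sub_eq_zero]
    ext i k
    have h4 := congrFun (congrFun h3 i) j
    rw [Matrix.mul_apply, Fin.sum_univ_one] at h4
    rw [Subsingleton.elim k 0]
    exact (mul_eq_zero.mp h4).resolve_right hj
  · intro h
    rw [h]
    simp
end

section
/- Let A ∈ ℂ^{n×n}, B ∈ ℂ^{n×1}, C ∈ ℂ^{1×n}, let s_1, …, s_ν ∈ ℂ be pairwise distinct and not eigenvalues of A, let S = diag(s_1, …, s_ν), L = [1 ⋯ 1] ∈ ℂ^{1×ν}, and let Π ∈ ℂ^{n×ν} be the matrix whose j-th column is (s_j I − A)^{-1}B. Let G ∈ ℂ^{ν×1} and let I_D ⊆ {1, …, ν} be a set of indices such that s_i I − S + GL is invertible for every i ∈ I_D. Then C(s_i I − A)^{-1} Π G = C(s_i I − A)^{-1} B holds for all i ∈ I_D if and only if CΠ(s_i I − S + GL)^{-2} G = C(s_i I − A)^{-2} B holds for all i ∈ I_D. -/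
open Matrix

/-- The linear constraint `C(sᵢI − A)⁻¹ Π G = C(sᵢI − A)⁻¹ B` for all `i ∈ I_D`
is equivalent to the first-order (derivative) moment matching condition
`CΠ(sᵢI − S + GL)⁻² G = C(sᵢI − A)⁻² B` for all `i ∈ I_D`,
where `S = diag(s₁,…,s_ν)` and `L = [1 ⋯ 1]`. -/
theorem stmt_7 {n ν : ℕ}
    (A : Matrix (Fin n) (Fin n) ℂ) (B : Matrix (Fin n) (Fin 1) ℂ)
    (C : Matrix (Fin 1) (Fin n) ℂ)
    (s : Fin ν → ℂ) (hdist : Function.Injective s)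
    (hA : ∀ j, IsUnit (s j • (1 : Matrix (Fin n) (Fin n) ℂ) - A))
    (Pm : Matrix (Fin n) (Fin ν) ℂ)
    (hPm : ∀ i j, Pm i j = ((s j • (1 : Matrix (Fin n) (Fin n) ℂ) - A)⁻¹ * B) i 0)
    (G : Matrix (Fin ν) (Fin 1) ℂ)
    (ID : Set (Fin ν))
    (hinv : ∀ i ∈ ID, IsUnit (s i • (1 : Matrix (Fin ν) (Fin ν) ℂ)
        - Matrix.diagonal s
        + G * (Matrix.of fun (_ : Fin 1) (_ : Fin ν) => (1 : ℂ)))) :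
    (∀ i ∈ ID, C * (s i • (1 : Matrix (Fin n) (Fin n) ℂ) - A)⁻¹ * Pm * G
        = C * (s i • (1 : Matrix (Fin n) (Fin n) ℂ) - A)⁻¹ * B)
    ↔ (∀ i ∈ ID,
        C * Pm * ((s i • (1 : Matrix (Fin ν) (Fin ν) ℂ) - Matrix.diagonal s
              + G * (Matrix.of fun (_ : Fin 1) (_ : Fin ν) => (1 : ℂ)))⁻¹
            * (s i • (1 : Matrix (Fin ν) (Fin ν) ℂ) - Matrix.diagonal s
              + G * (Matrix.of fun (_ : Fin 1) (_ : Fin ν) => (1 : ℂ)))⁻¹) * G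
          = C * ((s i • (1 : Matrix (Fin n) (Fin n) ℂ) - A)⁻¹
              * (s i • (1 : Matrix (Fin n) (Fin n) ℂ) - A)⁻¹) * B) := by
  refine forall₂_congr fun i hi => ?_
  have hM := hinv i hi
  have hAi := hA i
  have hcol : ∀ j, ((s j • (1 : Matrix (Fin n) (Fin n) ℂ) - A) * Pm).col j = B.col 0 := by
    intro j
    have h1 : (s j • (1 : Matrix (Fin n) (Fin n) ℂ) - A) *
        ((s j • (1 : Matrix (Fin n) (Fin n) ℂ) - A)⁻¹ * B) = B :=
      Matrix.mul_nonsing_inv_cancel_left _ _ ((Matrix.isUnit_iff_isUnit_det _).1 (hA j))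
    ext k
    have h2 := congrFun (congrFun h1 k) 0
    rw [Matrix.mul_apply] at h2
    simp only [Matrix.col_apply]
    rw [Matrix.mul_apply, ← h2]
    exact Finset.sum_congr rfl fun x _ => by rw [hPm]
  generalize hL : (Matrix.of fun (_ : Fin 1) (_ : Fin ν) => (1 : ℂ)) = L at *
  have hsyl : (s i • (1 : Matrix (Fin n) (Fin n) ℂ) - A) * Pm
      = Pm * (s i • (1 : Matrix (Fin ν) (Fin ν) ℂ) - Matrix.diagonal s) + B * L := by
    ext k j
    have h := congrFun (hcol j) k
    subst hL
    simp [Matrix.sub_mul, Matrix.mul_sub, Matrix.mul_apply (M := B)] at h ⊢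
    linear_combination h
  generalize hMd : s i • (1 : Matrix (Fin ν) (Fin ν) ℂ) - Matrix.diagonal s + G * L = M at *
  have hMdet := (Matrix.isUnit_iff_isUnit_det _).1 hM
  have hAdet := (Matrix.isUnit_iff_isUnit_det _).1 hAi
  obtain ⟨e, he⟩ : ∃ e : Matrix (Fin ν) (Fin 1) ℂ, e = Matrix.of fun k _ => if k = i then 1 else 0 :=
    ⟨_, rfl⟩
  have hMe : M * e = G := by
    ext k l
    fin_cases l
    subst hMd he hL
    by_cases hk : k = i
    · subst hk
      simp [Matrix.mul_apply]
    · simp [Matrix.mul_apply, hk]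
  have hMG : M⁻¹ * G = e := by
    rw [← hMe, Matrix.nonsing_inv_mul_cancel_left _ _ hMdet]
  obtain ⟨w, hw⟩ : ∃ w, w = M⁻¹ * e := ⟨_, rfl⟩
  have hMw : M * w = e := by
    rw [hw, Matrix.mul_nonsing_inv_cancel_left _ _ hMdet]
  have hLw : (L * w) 0 0 ≠ 0 := by
    intro h0
    have hz : L * w = 0 := by
      ext a b
      fin_cases a; fin_cases b
      exact h0
    rw [← hMd, Matrix.add_mul, Matrix.mul_assoc, hz] at hMw
    have := congrFun (congrFun hMw i) 0
    simp [he, Matrix.sub_mul] at this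
  have hPe : Pm * e = (s i • (1 : Matrix (Fin n) (Fin n) ℂ) - A)⁻¹ * B := by
    ext k l
    fin_cases l
    have := hPm k i
    subst he
    simp only [Matrix.mul_apply (M := Pm)]
    simpa using this
  generalize s i • (1 : Matrix (Fin n) (Fin n) ℂ) - A = T at *
  have hPw : Pm * w = T⁻¹ * (Pm * e) + T⁻¹ * (B - Pm * G) * (L * w) := by
    have h1 : T * (Pm * w) = Pm * e + (B - Pm * G) * (L * w) := by
      rw [← Matrix.mul_assoc, hsyl, ← hMw, ← hMd]
      simp only [Matrix.add_mul, Matrix.sub_mul, Matrix.mul_add, Matrix.mul_assoc]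
      abel
    rw [← Matrix.nonsing_inv_mul_cancel_left T (Pm * w) hAdet, h1, Matrix.mul_add, Matrix.mul_assoc]
  have key : C * Pm * (M⁻¹ * M⁻¹) * G
      = C * (T⁻¹ * T⁻¹) * B + (C * T⁻¹ * B - C * T⁻¹ * Pm * G) * (L * w) := by
    have : C * Pm * (M⁻¹ * M⁻¹) * G = C * (Pm * w) := by
      rw [hw, ← hMG]
      simp only [Matrix.mul_assoc]
    rw [this, hPw, hPe]
    simp only [Matrix.mul_add, Matrix.mul_sub, Matrix.sub_mul, Matrix.mul_assoc]
  rw [key]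
  constructor
  · intro h
    rw [h]; simp
  · intro h
    have h' := add_eq_left.1 h
    have h2 := congrFun (congrFun h' 0) 0
    rw [Matrix.mul_apply] at h2
    simp only [Fin.sum_univ_one, Fin.isValue, Matrix.zero_apply] at h2
    have h3 := (mul_eq_zero.1 h2).resolve_right hLw
    ext a b
    fin_cases a; fin_cases b
    exact (sub_eq_zero.1 h3).symm
end

section
/- Let A ∈ ℂ^{n×n}, B ∈ ℂ^{n×1}, C ∈ ℂ^{1×n}, and let q_1, …, q_ν, s_1, …, s_ν ∈ ℂ, none of which is an eigenvalue of A. Let Υ ∈ ℂ^{ν×n} be the matrix whose i-th row is C(q_i I − A)^{-1} and Π ∈ ℂ^{n×ν} the matrix whose j-th column is (s_j I − A)^{-1}B. Define 𝕃 ∈ ℂ^{ν×ν} entrywise by 𝕃_{ij} = (K(q_i) − K(s_j))/(q_i − s_j) whenever q_i ≠ s_j, and 𝕃_{ij} = −C(s_j I − A)^{-2}B (which equals K'(s_j)) whenever q_i = s_j, with K(s) = C(sI − A)^{-1}B. Then 𝕃 = −ΥΠ. -/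
open Matrix

/-- The Loewner matrix built from the data, with entries
`(K(qᵢ) − K(s_j))/(qᵢ − s_j)` when `qᵢ ≠ s_j` and `−C(s_jI − A)⁻²B = K'(s_j)`
when `qᵢ = s_j`, equals `−ΥΠ`, where the `i`-th row of `Υ` is `C(qᵢI − A)⁻¹`
and the `j`-th column of `Π` is `(s_jI − A)⁻¹B`. -/
theorem stmt_10 {n ν : ℕ}
    (A : Matrix (Fin n) (Fin n) ℂ) (B : Matrix (Fin n) (Fin 1) ℂ)
    (C : Matrix (Fin 1) (Fin n) ℂ)
    (q s : Fin ν → ℂ)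
    (hq : ∀ i, IsUnit (q i • (1 : Matrix (Fin n) (Fin n) ℂ) - A))
    (hs : ∀ j, IsUnit (s j • (1 : Matrix (Fin n) (Fin n) ℂ) - A))
    (Υ : Matrix (Fin ν) (Fin n) ℂ)
    (hΥ : ∀ i j, Υ i j = (C * (q i • (1 : Matrix (Fin n) (Fin n) ℂ) - A)⁻¹) 0 j)
    (Pm : Matrix (Fin n) (Fin ν) ℂ)
    (hPm : ∀ i j, Pm i j = ((s j • (1 : Matrix (Fin n) (Fin n) ℂ) - A)⁻¹ * B) i 0)
    (𝕃 : Matrix (Fin ν) (Fin ν) ℂ)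
    (h𝕃 : ∀ i j, 𝕃 i j =
      if q i = s j then
        (-(C * ((s j • (1 : Matrix (Fin n) (Fin n) ℂ) - A)⁻¹
            * (s j • (1 : Matrix (Fin n) (Fin n) ℂ) - A)⁻¹) * B)) 0 0
      else
        ((C * (q i • (1 : Matrix (Fin n) (Fin n) ℂ) - A)⁻¹ * B) 0 0
          - (C * (s j • (1 : Matrix (Fin n) (Fin n) ℂ) - A)⁻¹ * B) 0 0)
          / (q i - s j)) :
    𝕃 = -(Υ * Pm) := by
  ext i j
  have hU : (Υ * Pm) i j = ((C * (q i • (1 : Matrix (Fin n) (Fin n) ℂ) - A)⁻¹) *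
      ((s j • (1 : Matrix (Fin n) (Fin n) ℂ) - A)⁻¹ * B)) 0 0 := by
    rw [Matrix.mul_apply, Matrix.mul_apply]
    exact Finset.sum_congr rfl fun k _ => by rw [hΥ, hPm]
  rw [h𝕃, Matrix.neg_apply (Υ * Pm) i j, hU]
  split_ifs with h
  · rw [h, Matrix.neg_apply]
    simp only [Matrix.mul_assoc]
  · have hne : q i - s j ≠ 0 := sub_ne_zero.mpr h
    have hX := (Matrix.isUnit_iff_isUnit_det _).mp (hq i)
    have hY := (Matrix.isUnit_iff_isUnit_det _).mp (hs j)
    have hXY : (s j • (1 : Matrix (Fin n) (Fin n) ℂ) - A) -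
        (q i • (1 : Matrix (Fin n) (Fin n) ℂ) - A) =
        (-(q i - s j)) • (1 : Matrix (Fin n) (Fin n) ℂ) := by
      module
    generalize (q i • (1 : Matrix (Fin n) (Fin n) ℂ) - A) = X at *
    generalize (s j • (1 : Matrix (Fin n) (Fin n) ℂ) - A) = Y at *
    have key : X⁻¹ - Y⁻¹ = (-(q i - s j)) • (X⁻¹ * Y⁻¹) := by
      have h1 : X⁻¹ * (Y - X) * Y⁻¹ = X⁻¹ - Y⁻¹ := by
        rw [Matrix.mul_sub, Matrix.sub_mul, Matrix.nonsing_inv_mul _ hX, Matrix.mul_assoc,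
          Matrix.mul_nonsing_inv _ hY, Matrix.mul_one, Matrix.one_mul]
      rw [← h1, hXY, Matrix.mul_smul, Matrix.mul_one, Matrix.smul_mul]
    rw [div_eq_iff hne, ← Matrix.sub_apply, ← Matrix.sub_mul, ← Matrix.mul_sub, key,
      Matrix.mul_smul, Matrix.smul_mul, Matrix.smul_apply, smul_eq_mul]
    simp only [Matrix.mul_assoc]
    ring
end

section
/- Let A ∈ ℂ^{n×n}, B ∈ ℂ^{n×1}, C ∈ ℂ^{1×n}, and let q_1, …, q_ν, s_1, …, s_ν ∈ ℂ, none of which is an eigenvalue of A. Let Υ ∈ ℂ^{ν×n} be the matrix whose i-th row is C(q_i I − A)^{-1} and Π ∈ ℂ^{n×ν} the matrix whose j-th column is (s_j I − A)^{-1}B. Define σ𝕃 ∈ ℂ^{ν×ν} entrywise by σ𝕃_{ij} = (q_i K(q_i) − s_j K(s_j))/(q_i − s_j) whenever q_i ≠ s_j, and σ𝕃_{ij} = −C A (s_j I − A)^{-2}B (which equals the derivative of s ↦ sK(s) at s_j) whenever q_i = s_j, with K(s) = C(sI − A)^{-1}B. Then σ𝕃 = −Υ A Π. -/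
open Matrix

/-- The shifted Loewner matrix built from the data, with entries
`(qᵢK(qᵢ) − s_jK(s_j))/(qᵢ − s_j)` when `qᵢ ≠ s_j` and `−CA(s_jI − A)⁻²B`
(the derivative of `s ↦ sK(s)` at `s_j`) when `qᵢ = s_j`, equals `−ΥAΠ`,
where the `i`-th row of `Υ` is `C(qᵢI − A)⁻¹` and the `j`-th column of `Π`
is `(s_jI − A)⁻¹B`. -/
theorem stmt_11 {n ν : ℕ}
    (A : Matrix (Fin n) (Fin n) ℂ) (B : Matrix (Fin n) (Fin 1) ℂ)
    (C : Matrix (Fin 1) (Fin n) ℂ)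
    (q s : Fin ν → ℂ)
    (hq : ∀ i, IsUnit (q i • (1 : Matrix (Fin n) (Fin n) ℂ) - A))
    (hs : ∀ j, IsUnit (s j • (1 : Matrix (Fin n) (Fin n) ℂ) - A))
    (Υ : Matrix (Fin ν) (Fin n) ℂ)
    (hΥ : ∀ i j, Υ i j = (C * (q i • (1 : Matrix (Fin n) (Fin n) ℂ) - A)⁻¹) 0 j)
    (Pm : Matrix (Fin n) (Fin ν) ℂ)
    (hPm : ∀ i j, Pm i j = ((s j • (1 : Matrix (Fin n) (Fin n) ℂ) - A)⁻¹ * B) i 0)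
    (σ𝕃 : Matrix (Fin ν) (Fin ν) ℂ)
    (hσ𝕃 : ∀ i j, σ𝕃 i j =
      if q i = s j then
        (-(C * A * ((s j • (1 : Matrix (Fin n) (Fin n) ℂ) - A)⁻¹
            * (s j • (1 : Matrix (Fin n) (Fin n) ℂ) - A)⁻¹) * B)) 0 0
      else
        (q i * (C * (q i • (1 : Matrix (Fin n) (Fin n) ℂ) - A)⁻¹ * B) 0 0
          - s j * (C * (s j • (1 : Matrix (Fin n) (Fin n) ℂ) - A)⁻¹ * B) 0 0)
          / (q i - s j)) :
    σ𝕃 = -(Υ * A * Pm) := by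
  ext i j
  have e : (Υ * A * Pm) i j = (C * ((q i • (1 : Matrix (Fin n) (Fin n) ℂ) - A)⁻¹ * A
      * (s j • (1 : Matrix (Fin n) (Fin n) ℂ) - A)⁻¹) * B) 0 0 := by
    have e1 : (Υ * A * Pm) i j = ((C * (q i • (1 : Matrix (Fin n) (Fin n) ℂ) - A)⁻¹) * A
      * ((s j • (1 : Matrix (Fin n) (Fin n) ℂ) - A)⁻¹ * B)) 0 0 := by
      rw [Matrix.mul_apply, Matrix.mul_apply]
      refine Finset.sum_congr rfl fun k _ => ?_
      rw [hPm, Matrix.mul_apply (M := Υ), Matrix.mul_apply (N := A)]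
      simp only [hΥ]
    rw [e1]
    simp only [Matrix.mul_assoc]
  rw [Matrix.neg_apply, e, hσ𝕃]
  have h1 := Matrix.nonsing_inv_mul _ ((Matrix.isUnit_iff_isUnit_det _).1 (hq i))
  have h2 := Matrix.mul_nonsing_inv _ ((Matrix.isUnit_iff_isUnit_det _).1 (hs j))
  have h3 := Matrix.nonsing_inv_mul _ ((Matrix.isUnit_iff_isUnit_det _).1 (hs j))
  split_ifs with h
  · rw [h, Matrix.neg_apply]
    generalize (s j • (1 : Matrix (Fin n) (Fin n) ℂ) - A)⁻¹ = Y at *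
    have hc : A * Y = Y * A := by
      have h4 := h2.trans h3.symm
      rw [sub_mul, mul_sub, smul_mul_assoc, mul_smul_comm, one_mul, mul_one] at h4
      exact sub_right_injective h4
    rw [Matrix.mul_assoc C A, ← Matrix.mul_assoc A, hc]
  · generalize (s j • (1 : Matrix (Fin n) (Fin n) ℂ) - A)⁻¹ = Y at *
    generalize (q i • (1 : Matrix (Fin n) (Fin n) ℂ) - A)⁻¹ = X at *
    rw [mul_sub, mul_smul_comm, mul_one, sub_eq_iff_eq_add] at h1
    rw [sub_mul, smul_mul_assoc, one_mul, sub_eq_iff_eq_add] at h2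
    have key : q i • X - s j • Y = -((q i - s j) • (X * A * Y)) := by
      have a1 : q i • (X * A * Y) = A * Y + X * A * (A * Y) := by
        rw [← smul_mul_assoc, ← smul_mul_assoc, h1]; noncomm_ring
      have a2 : s j • (X * A * Y) = X * A + X * A * (A * Y) := by
        rw [← mul_smul_comm, h2]; noncomm_ring
      rw [sub_smul, a1, a2, h1, h2]; abel
    rw [div_eq_iff (sub_ne_zero.2 h)]
    have k2 := congrArg (fun M => (C * M * B) 0 0) key
    simp only [Matrix.mul_sub, Matrix.sub_mul, Matrix.mul_smul, Matrix.smul_mul, Matrix.mul_neg,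
      Matrix.neg_mul, Matrix.sub_apply, Matrix.neg_apply, Matrix.smul_apply, smul_eq_mul] at k2
    rw [k2]; ring
end

section
/- Let A ∈ ℂ^{n×n}, B ∈ ℂ^{n×1}, S ∈ ℂ^{ν×ν}, L ∈ ℂ^{1×ν}, Q ∈ ℂ^{ν×ν} and 𝐑 ∈ ℂ^{ν×n}. Suppose Π ∈ ℂ^{n×ν} satisfies AΠ + BL = ΠS and Υ ∈ ℂ^{ν×n} satisfies QΥ = Υ A + 𝐑. Then the matrix 𝕃 = −ΥΠ satisfies the Sylvester equation 𝕃 S − Q 𝕃 = 𝐑 Π − Υ B L. -/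
open Matrix

/-- If `AΠ + BL = ΠS` and `QΥ = ΥA + 𝐑`, then `𝕃 = −ΥΠ` satisfies the
Sylvester equation `𝕃S − Q𝕃 = 𝐑Π − ΥBL`. -/
theorem stmt_12 {n ν : ℕ}
    (A : Matrix (Fin n) (Fin n) ℂ) (B : Matrix (Fin n) (Fin 1) ℂ)
    (S : Matrix (Fin ν) (Fin ν) ℂ) (L : Matrix (Fin 1) (Fin ν) ℂ)
    (Q : Matrix (Fin ν) (Fin ν) ℂ) (R : Matrix (Fin ν) (Fin n) ℂ)
    (Pm : Matrix (Fin n) (Fin ν) ℂ)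
    (hPm : A * Pm + B * L = Pm * S)
    (Υ : Matrix (Fin ν) (Fin n) ℂ)
    (hΥ : Q * Υ = Υ * A + R) :
    (-(Υ * Pm)) * S - Q * (-(Υ * Pm)) = R * Pm - Υ * B * L := by
  rw [Matrix.neg_mul, Matrix.mul_neg, Matrix.mul_assoc Υ Pm S, ← hPm, ← Matrix.mul_assoc Q Υ Pm, hΥ,
    Matrix.mul_add, Matrix.add_mul, Matrix.mul_assoc Υ A Pm, Matrix.mul_assoc Υ B L]
  abel
end

section
/- Let A ∈ ℂ^{n×n}, B ∈ ℂ^{n×1}, S ∈ ℂ^{ν×ν}, L ∈ ℂ^{1×ν}, Q ∈ ℂ^{ν×ν} and 𝐑 ∈ ℂ^{ν×n}. Suppose Π ∈ ℂ^{n×ν} satisfies AΠ + BL = ΠS and Υ ∈ ℂ^{ν×n} satisfies QΥ = Υ A + 𝐑. Then the matrix σ𝕃 = −Υ A Π satisfies the Sylvester equation σ𝕃 S − Q σ𝕃 = 𝐑 Π S − Q Υ B L. -/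
open Matrix

/-- If `AΠ + BL = ΠS` and `QΥ = ΥA + 𝐑`, then `σ𝕃 = −ΥAΠ` satisfies the
Sylvester equation `σ𝕃S − Qσ𝕃 = 𝐑ΠS − QΥBL`. -/
theorem stmt_13 {n ν : ℕ}
    (A : Matrix (Fin n) (Fin n) ℂ) (B : Matrix (Fin n) (Fin 1) ℂ)
    (S : Matrix (Fin ν) (Fin ν) ℂ) (L : Matrix (Fin 1) (Fin ν) ℂ)
    (Q : Matrix (Fin ν) (Fin ν) ℂ) (R : Matrix (Fin ν) (Fin n) ℂ)
    (Pm : Matrix (Fin n) (Fin ν) ℂ)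
    (hPm : A * Pm + B * L = Pm * S)
    (Υ : Matrix (Fin ν) (Fin n) ℂ)
    (hΥ : Q * Υ = Υ * A + R) :
    (-(Υ * A * Pm)) * S - Q * (-(Υ * A * Pm)) = R * Pm * S - Q * (Υ * B * L) := by
  have hR : R = Q * Υ - Υ * A := by rw [hΥ]; abel
  have hB : B * L = Pm * S - A * Pm := by rw [← hPm]; abel
  rw [Matrix.mul_assoc Υ B L, hB, hR]
  simp only [Matrix.mul_sub, Matrix.sub_mul, Matrix.neg_mul, Matrix.mul_neg, Matrix.mul_assoc]
  abel
end

section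
/- Let A ∈ ℂ^{n×n}, B ∈ ℂ^{n×1}, C ∈ ℂ^{1×n}, S ∈ ℂ^{ν×ν}, L ∈ ℂ^{1×ν}, and let Π ∈ ℂ^{n×ν} satisfy AΠ + BL = ΠS. Let Υ ∈ ℂ^{ν×n} be such that 𝕃 = −ΥΠ is invertible, set σ𝕃 = −Υ A Π and G = −𝕃^{-1} Υ B. Then for every s ∈ ℂ such that sI − S + GL is invertible, the matrix σ𝕃 − s𝕃 is invertible and CΠ(sI − S + GL)^{-1} G = CΠ(σ𝕃 − s𝕃)^{-1} Υ B; that is, the transfer function of the reduced model Σ_G admits the Loewner-matrix representation K_G(s) = CΠ(σ𝕃 − s𝕃)^{-1}ΥB. -/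
open Matrix

/-- Loewner-matrix representation of the reduced transfer function: with
`𝕃 = −ΥΠ` invertible, `σ𝕃 = −ΥAΠ` and `G = −𝕃⁻¹ΥB`, for every `s` such that
`sI − S + GL` is invertible, `σ𝕃 − s𝕃` is invertible and
`CΠ(sI − S + GL)⁻¹G = CΠ(σ𝕃 − s𝕃)⁻¹ΥB`. -/
theorem stmt_14 {n ν : ℕ}
    (A : Matrix (Fin n) (Fin n) ℂ) (B : Matrix (Fin n) (Fin 1) ℂ)
    (C : Matrix (Fin 1) (Fin n) ℂ)
    (S : Matrix (Fin ν) (Fin ν) ℂ) (L : Matrix (Fin 1) (Fin ν) ℂ)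
    (Pm : Matrix (Fin n) (Fin ν) ℂ)
    (hPm : A * Pm + B * L = Pm * S)
    (Υ : Matrix (Fin ν) (Fin n) ℂ)
    (h𝕃 : IsUnit (-(Υ * Pm)))
    (G : Matrix (Fin ν) (Fin 1) ℂ)
    (hG : G = -((-(Υ * Pm))⁻¹ * (Υ * B)))
    (z : ℂ)
    (hz : IsUnit (z • (1 : Matrix (Fin ν) (Fin ν) ℂ) - S + G * L)) :
    IsUnit (-(Υ * A * Pm) - z • (-(Υ * Pm)))
    ∧ C * Pm * (z • (1 : Matrix (Fin ν) (Fin ν) ℂ) - S + G * L)⁻¹ * G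
        = C * Pm * (-(Υ * A * Pm) - z • (-(Υ * Pm)))⁻¹ * (Υ * B) := by
  have hE : IsUnit (-(Υ * Pm)).det := (Matrix.isUnit_iff_isUnit_det _).1 h𝕃
  have hEG : (-(Υ * Pm)) * G = -(Υ * B) := by
    rw [hG, Matrix.mul_neg, Matrix.mul_nonsing_inv_cancel_left _ _ hE]
  have h1 : Υ * A * Pm + Υ * B * L = Υ * Pm * S := by
    rw [Matrix.mul_assoc, Matrix.mul_assoc, Matrix.mul_assoc, ← hPm, Matrix.mul_add]
  have key : -(Υ * A * Pm) - z • (-(Υ * Pm))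
      = (-(Υ * Pm)) * (-(z • (1 : Matrix (Fin ν) (Fin ν) ℂ) - S + G * L)) := by
    have h2 : (-(Υ * Pm)) * (G * L) = -(Υ * B * L) := by
      rw [← Matrix.mul_assoc, hEG, Matrix.neg_mul]
    rw [Matrix.mul_neg, Matrix.mul_add, h2, Matrix.mul_sub, Matrix.mul_smul, Matrix.mul_one,
      Matrix.neg_mul _ S, ← h1]
    abel
  refine ⟨key ▸ h𝕃.mul hz.neg, ?_⟩
  have hinv : (-(z • (1 : Matrix (Fin ν) (Fin ν) ℂ) - S + G * L))⁻¹
      = -(z • (1 : Matrix (Fin ν) (Fin ν) ℂ) - S + G * L)⁻¹ := by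
    apply Matrix.inv_eq_right_inv
    rw [neg_mul_neg, Matrix.mul_nonsing_inv _ ((Matrix.isUnit_iff_isUnit_det _).1 hz)]
  have hG' : (-(Υ * Pm))⁻¹ * (Υ * B) = -G := by rw [hG, neg_neg]
  rw [key, Matrix.mul_inv_rev, hinv, Matrix.mul_assoc (C * Pm), Matrix.mul_assoc (C * Pm),
    Matrix.mul_assoc _ _ (Υ * B), hG', Matrix.neg_mul, Matrix.mul_neg, Matrix.mul_neg, Matrix.mul_neg, neg_neg]
end

section
/- Let A ∈ ℂ^{n×n}, B ∈ ℂ^{n×1}, C ∈ ℂ^{1×n}, S ∈ ℂ^{ν×ν}, L ∈ ℂ^{1×ν}, and let Π ∈ ℂ^{n×ν} satisfy AΠ + BL = ΠS. Let ℓ ≤ ν, Q_P ∈ ℂ^{ℓ×ℓ}, R_P ∈ ℂ^{ℓ×1}, C_P ∈ ℂ^{1×n} with C_P Π = 0, S_D ∈ ℂ^{(ν−ℓ)×(ν−ℓ)}, R ∈ ℂ^{(ν−ℓ)×1}, and suppose Υ_P ∈ ℂ^{ℓ×n} satisfies Q_P Υ_P = Υ_P A + R_P C_P and Υ_D ∈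 ℂ^{(ν−ℓ)×n} satisfies S_D Υ_D = Υ_D A + R C. Let Υ = [Υ_P; Υ_D] ∈ ℂ^{ν×n} (the block rows stacked) and assume ΥΠ is invertible. If G = (ΥΠ)^{-1} Υ B, then every eigenvalue of Q_P is an eigenvalue of S − GL, and moreover Υ_D Π G = Υ_D B. -/
open Matrix

/-- Simultaneous pole placement and first-order moment matching via the
generalized Loewner matrix: with `Υ = [Υ_P; Υ_D]` stacked (indices
`Fin ℓ ⊕ Fin m`, `ν = ℓ + m`), `ΥΠ` invertible and `G = (ΥΠ)⁻¹ΥB`,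
every eigenvalue of `Q_P` is an eigenvalue of `S − GL` and `Υ_D Π G = Υ_D B`. -/
theorem stmt_15 {n ℓ m : ℕ}
    (A : Matrix (Fin n) (Fin n) ℂ) (B : Matrix (Fin n) (Fin 1) ℂ)
    (C : Matrix (Fin 1) (Fin n) ℂ)
    (S : Matrix (Fin ℓ ⊕ Fin m) (Fin ℓ ⊕ Fin m) ℂ)
    (L : Matrix (Fin 1) (Fin ℓ ⊕ Fin m) ℂ)
    (Pm : Matrix (Fin n) (Fin ℓ ⊕ Fin m) ℂ)
    (hPm : A * Pm + B * L = Pm * S)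
    (Qp : Matrix (Fin ℓ) (Fin ℓ) ℂ) (Rp : Matrix (Fin ℓ) (Fin 1) ℂ)
    (Cp : Matrix (Fin 1) (Fin n) ℂ) (hCp : Cp * Pm = 0)
    (SD : Matrix (Fin m) (Fin m) ℂ) (R : Matrix (Fin m) (Fin 1) ℂ)
    (Υp : Matrix (Fin ℓ) (Fin n) ℂ)
    (hΥp : Qp * Υp = Υp * A + Rp * Cp)
    (Υd : Matrix (Fin m) (Fin n) ℂ)
    (hΥd : SD * Υd = Υd * A + R * C)
    (hinv : IsUnit (Matrix.fromRows Υp Υd * Pm))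
    (G : Matrix (Fin ℓ ⊕ Fin m) (Fin 1) ℂ)
    (hG : G = (Matrix.fromRows Υp Υd * Pm)⁻¹ * (Matrix.fromRows Υp Υd * B)) :
    spectrum ℂ Qp ⊆ spectrum ℂ (S - G * L) ∧ Υd * Pm * G = Υd * B := by
  have hdet : IsUnit (Matrix.fromRows Υp Υd * Pm).det :=
    (Matrix.isUnit_iff_isUnit_det _).1 hinv
  have hMG : Matrix.fromRows Υp Υd * Pm * G = Matrix.fromRows Υp Υd * B := by
    rw [hG, Matrix.mul_nonsing_inv_cancel_left _ _ hdet]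
  have h1 : Matrix.fromRows (Υp * Pm * G) (Υd * Pm * G)
      = Matrix.fromRows (Υp * B) (Υd * B) := by
    simpa only [Matrix.fromRows_mul] using hMG
  obtain ⟨hp, hd⟩ := Matrix.fromRows_inj h1
  refine ⟨?_, hd⟩
  have hW : Υp * Pm * (S - G * L) = Qp * (Υp * Pm) := by
    rw [Matrix.mul_sub, ← Matrix.mul_assoc _ G L, hp, Matrix.mul_assoc Υp Pm S, ← hPm,
      ← Matrix.mul_assoc Qp, hΥp, Matrix.add_mul, Matrix.mul_assoc Rp, hCp, Matrix.mul_add]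
    simp [Matrix.mul_assoc]
  have hV : ∃ V : Matrix (Fin ℓ ⊕ Fin m) (Fin ℓ) ℂ, Υp * Pm * V = 1 := by
    refine ⟨((Matrix.fromRows Υp Υd * Pm)⁻¹).submatrix id Sum.inl, ?_⟩
    have h2 := Matrix.mul_nonsing_inv _ hdet
    ext i j
    have h3 := congrFun (congrFun h2 (Sum.inl i)) (Sum.inl j)
    rw [Matrix.mul_apply] at h3 ⊢
    simpa [Matrix.fromRows_mul, Matrix.one_apply] using h3
  obtain ⟨V, hV⟩ := hV
  intro z hz
  rw [spectrum.mem_iff] at hz ⊢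
  intro hN
  apply hz
  obtain ⟨N, hNr, -⟩ := isUnit_iff_exists.1 hN
  have hWN : (algebraMap ℂ _ z - Qp) * (Υp * Pm)
      = Υp * Pm * (algebraMap ℂ _ z - (S - G * L)) := by
    rw [Matrix.mul_sub, hW, Matrix.sub_mul]
    simp [Algebra.algebraMap_eq_smul_one]
  have hfin : (algebraMap ℂ _ z - Qp) * (Υp * Pm * N * V) = 1 := by
    rw [← Matrix.mul_assoc, ← Matrix.mul_assoc _ (Υp * Pm) N, hWN,
      Matrix.mul_assoc (Υp * Pm) _ N, hNr, Matrix.mul_one, hV]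
  exact IsUnit.of_mul_eq_one _ hfin
end

section
/- Let A ∈ ℂ^{n×n}, B ∈ ℂ^{n×1}, C ∈ ℂ^{1×n}, let s_1, …, s_ν ∈ ℂ, none of which is an eigenvalue of A, let S = diag(s_1, …, s_ν), L = [1 ⋯ 1] ∈ ℂ^{1×ν}, and let Π ∈ ℂ^{n×ν} be the matrix whose j-th column is (s_j I − A)^{-1}B (so that AΠ + BL = ΠS). Then for every G ∈ ℂ^{ν×1} and every index j such that s_j I − S + GL is invertible, CΠ(s_j I − S + GL)^{-1} G = C(s_j I − A)^{-1} B; that is, the reduced model Σ_G interpolates the original transfer function: K_G(s_j) = K(s_j). -/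
open Matrix

/-- Zero-order moment matching of the parametrized family `Σ_G`: with
`S = diag(s₁,…,s_ν)`, `L = [1 ⋯ 1]` and `Π` whose `j`-th column is
`(s_jI − A)⁻¹B`, for every `G` and every `j` with `s_jI − S + GL` invertible,
`CΠ(s_jI − S + GL)⁻¹G = C(s_jI − A)⁻¹B`, i.e. `K_G(s_j) = K(s_j)`. -/
theorem stmt_17 {n ν : ℕ}
    (A : Matrix (Fin n) (Fin n) ℂ) (B : Matrix (Fin n) (Fin 1) ℂ)
    (C : Matrix (Fin 1) (Fin n) ℂ)
    (s : Fin ν → ℂ)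
    (hA : ∀ j, IsUnit (s j • (1 : Matrix (Fin n) (Fin n) ℂ) - A))
    (Pm : Matrix (Fin n) (Fin ν) ℂ)
    (hPm : ∀ i j, Pm i j = ((s j • (1 : Matrix (Fin n) (Fin n) ℂ) - A)⁻¹ * B) i 0)
    (G : Matrix (Fin ν) (Fin 1) ℂ) (j : Fin ν)
    (hj : IsUnit (s j • (1 : Matrix (Fin ν) (Fin ν) ℂ) - Matrix.diagonal s
        + G * (Matrix.of fun (_ : Fin 1) (_ : Fin ν) => (1 : ℂ)))) :
    C * Pm * (s j • (1 : Matrix (Fin ν) (Fin ν) ℂ) - Matrix.diagonal s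
        + G * (Matrix.of fun (_ : Fin 1) (_ : Fin ν) => (1 : ℂ)))⁻¹ * G
      = C * (s j • (1 : Matrix (Fin n) (Fin n) ℂ) - A)⁻¹ * B := by
  have hE : (s j • (1 : Matrix (Fin ν) (Fin ν) ℂ) - Matrix.diagonal s
        + G * (Matrix.of fun (_ : Fin 1) (_ : Fin ν) => (1 : ℂ)))
        * (Matrix.of fun (i : Fin ν) (_ : Fin 1) => if i = j then (1 : ℂ) else 0) = G := by
    ext i k
    obtain rfl : k = 0 := Subsingleton.elim _ _
    simp only [Matrix.mul_apply, Matrix.of_apply, mul_ite, mul_one, mul_zero,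
      Finset.sum_ite_eq', Finset.mem_univ, if_true, Matrix.add_apply, Matrix.sub_apply,
      Matrix.smul_apply, Finset.univ_unique, Finset.sum_singleton, smul_eq_mul]
    by_cases h : i = j
    · subst h
      simp
    · simp [h]
  have hP : Pm * (Matrix.of fun (i : Fin ν) (_ : Fin 1) => if i = j then (1 : ℂ) else 0)
      = (s j • (1 : Matrix (Fin n) (Fin n) ℂ) - A)⁻¹ * B := by
    ext i k
    obtain rfl : k = 0 := Subsingleton.elim _ _
    rw [← hPm]
    simp [Matrix.mul_apply]
  generalize (s j • (1 : Matrix (Fin ν) (Fin ν) ℂ) - Matrix.diagonal s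
        + G * (Matrix.of fun (_ : Fin 1) (_ : Fin ν) => (1 : ℂ))) = M at hj hE ⊢
  rw [Matrix.mul_assoc C _ B, ← hP, ← hE, Matrix.mul_assoc (C * Pm),
    Matrix.nonsing_inv_mul_cancel_left _ _ ((Matrix.isUnit_iff_isUnit_det _).1 hj),
    Matrix.mul_assoc]
end

section
/- Let A ∈ ℂ^{n×n}, B ∈ ℂ^{n×1}, C ∈ ℂ^{1×n}, let s_1, …, s_ν ∈ ℂ be pairwise distinct and not eigenvalues of A, let S = diag(s_1, …, s_ν), L = [1 ⋯ 1] ∈ ℂ^{1×ν}, and let Π ∈ ℂ^{n×ν} have j-th column (s_j I − A)^{-1}B. Let λ_1, …, λ_ℓ ∈ ℂ (ℓ ≤ ν) be distinct from all s_i and not eigenvalues of A, let C_P ∈ ℂ^{1×n} satisfy C_P Π = 0, let Υ_P ∈ ℂ^{ℓ×n} have k-th row C_P(λ_k I − A)^{-1}, let Υ_D ∈ ℂ^{(ν−ℓ)×n} have rows C(s_i I − A)^{-1} for i = ℓ+1, …, ν, and let Υ = [Υ_P; Υ_D]. If ΥΠ is invertible and G = (g_1, …, g_ν)^T = (ΥΠ)^{-1}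 Υ B, then G satisfies the linear system: 1 + Σ_{i=1}^{ν} g_i/(λ_k − s_i) = 0 for every k = 1:ℓ, and Υ_D Π G = Υ_D B. -/
open Matrix

/-- The explicit Loewner-based parameter `G = (ΥΠ)⁻¹ΥB` satisfies the linear
constraint system: the pole-placement equations `1 + ∑ᵢ gᵢ/(λ_k − sᵢ) = 0`
for `k = 1:ℓ`, and the derivative moment matching constraint `Υ_D Π G = Υ_D B`.
Here the interpolation points are indexed by `Fin ℓ ⊕ Fin m` (`ν = ℓ + m`),
`Υ_P` has `k`-th row `C_P(λ_kI − A)⁻¹`, `Υ_D` has rows `C(sᵢI − A)⁻¹` for the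
last `m` points, and `Π` has `j`-th column `(s_jI − A)⁻¹B`. -/
theorem stmt_18 {n ℓ m : ℕ}
    (A : Matrix (Fin n) (Fin n) ℂ) (B : Matrix (Fin n) (Fin 1) ℂ)
    (C : Matrix (Fin 1) (Fin n) ℂ)
    (s : Fin ℓ ⊕ Fin m → ℂ) (hdist : Function.Injective s)
    (hsA : ∀ i, IsUnit (s i • (1 : Matrix (Fin n) (Fin n) ℂ) - A))
    (lam : Fin ℓ → ℂ)
    (hlams : ∀ k i, lam k ≠ s i)
    (hlamA : ∀ k, IsUnit (lam k • (1 : Matrix (Fin n) (Fin n) ℂ) - A))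
    (Pm : Matrix (Fin n) (Fin ℓ ⊕ Fin m) ℂ)
    (hPm : ∀ i j, Pm i j = ((s j • (1 : Matrix (Fin n) (Fin n) ℂ) - A)⁻¹ * B) i 0)
    (Cp : Matrix (Fin 1) (Fin n) ℂ) (hCp : Cp * Pm = 0)
    (Υp : Matrix (Fin ℓ) (Fin n) ℂ)
    (hΥp : ∀ k j, Υp k j = (Cp * (lam k • (1 : Matrix (Fin n) (Fin n) ℂ) - A)⁻¹) 0 j)
    (Υd : Matrix (Fin m) (Fin n) ℂ)
    (hΥd : ∀ i j, Υd i j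
        = (C * (s (Sum.inr i) • (1 : Matrix (Fin n) (Fin n) ℂ) - A)⁻¹) 0 j)
    (hinv : IsUnit (Matrix.fromRows Υp Υd * Pm))
    (G : Matrix (Fin ℓ ⊕ Fin m) (Fin 1) ℂ)
    (hG : G = (Matrix.fromRows Υp Υd * Pm)⁻¹ * (Matrix.fromRows Υp Υd * B)) :
    (∀ k : Fin ℓ, 1 + ∑ i, G i 0 / (lam k - s i) = 0)
    ∧ Υd * Pm * G = Υd * B := by
  have hdet : IsUnit (Matrix.fromRows Υp Υd * Pm).det :=
    (Matrix.isUnit_iff_isUnit_det _).1 hinv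
  have hlin : (Matrix.fromRows Υp Υd * Pm) * G = Matrix.fromRows Υp Υd * B := by
    rw [hG, Matrix.mul_nonsing_inv_cancel_left _ _ hdet]
  have hCpj : ∀ j, (Cp * ((s j • (1 : Matrix (Fin n) (Fin n) ℂ) - A)⁻¹ * B)) 0 0 = 0 := by
    intro j
    have h := congrFun (congrFun hCp 0) j
    rw [Matrix.mul_apply] at h ⊢
    simpa [hPm] using h
  have hres : ∀ k j, (Υp * Pm) k j * (lam k - s j)
      = -(Cp * ((lam k • (1 : Matrix (Fin n) (Fin n) ℂ) - A)⁻¹ * B)) 0 0 := by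
    intro k j
    have h1 : (Υp * Pm) k j
        = (Cp * ((lam k • (1 : Matrix (Fin n) (Fin n) ℂ) - A)⁻¹
          * ((s j • (1 : Matrix (Fin n) (Fin n) ℂ) - A)⁻¹ * B))) 0 0 := by
      rw [← Matrix.mul_assoc, Matrix.mul_apply, Matrix.mul_apply]
      simp only [hPm, hΥp]
    have hl := (Matrix.isUnit_iff_isUnit_det _).1 (hlamA k)
    have hs := (Matrix.isUnit_iff_isUnit_det _).1 (hsA j)
    have h0 := hCpj j
    rw [h1]
    set X := lam k • (1 : Matrix (Fin n) (Fin n) ℂ) - A with hX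
    set Y := s j • (1 : Matrix (Fin n) (Fin n) ℂ) - A with hY
    have hXY : X - Y = (lam k - s j) • (1 : Matrix (Fin n) (Fin n) ℂ) := by
      rw [hX, hY, sub_smul]; abel
    have h2 : (lam k - s j) • (X⁻¹ * (Y⁻¹ * B)) = Y⁻¹ * B - X⁻¹ * B := by
      calc (lam k - s j) • (X⁻¹ * (Y⁻¹ * B))
          = X⁻¹ * ((X - Y) * (Y⁻¹ * B)) := by
            rw [hXY, Matrix.smul_mul, Matrix.one_mul, Matrix.mul_smul]
        _ = Y⁻¹ * B - X⁻¹ * B := by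
            rw [Matrix.sub_mul, Matrix.mul_sub, Matrix.nonsing_inv_mul_cancel_left _ _ hl,
              Matrix.mul_nonsing_inv_cancel_left _ _ hs]
    have h3 : (lam k - s j) • (Cp * (X⁻¹ * (Y⁻¹ * B)))
        = Cp * (Y⁻¹ * B) - Cp * (X⁻¹ * B) := by
      rw [← Matrix.mul_smul, h2, Matrix.mul_sub]
    have h4 := congrFun (congrFun h3 0) 0
    rw [Matrix.smul_apply, Matrix.sub_apply, h0, smul_eq_mul] at h4
    rw [mul_comm, h4, zero_sub]
  rw [Matrix.fromRows_mul, Matrix.fromRows_mul, Matrix.fromRows_mul] at hlin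
  refine ⟨?_, ?_⟩
  · intro k
    have hk : ∀ j, (Υp * Pm) k j
        = -(Cp * ((lam k • (1 : Matrix (Fin n) (Fin n) ℂ) - A)⁻¹ * B)) 0 0 / (lam k - s j) :=
      fun j => eq_div_of_mul_eq (sub_ne_zero.2 (hlams k j)) (hres k j)
    have hw : (Υp * B) k 0
        = (Cp * ((lam k • (1 : Matrix (Fin n) (Fin n) ℂ) - A)⁻¹ * B)) 0 0 := by
      rw [← Matrix.mul_assoc, Matrix.mul_apply, Matrix.mul_apply]
      simp only [hΥp]
    set w := (Cp * ((lam k • (1 : Matrix (Fin n) (Fin n) ℂ) - A)⁻¹ * B)) 0 0 with hwdef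
    have hw0 : w ≠ 0 := by
      intro hz
      apply hdet.ne_zero
      apply Matrix.det_eq_zero_of_row_eq_zero (Sum.inl k)
      intro j
      rw [Matrix.fromRows_mul, Matrix.fromRows_apply_inl, hk j, hz]
      simp
    have e := congrFun (congrFun hlin (Sum.inl k)) 0
    rw [Matrix.fromRows_apply_inl, Matrix.fromRows_apply_inl, hw, Matrix.mul_apply] at e
    have e2 : ∑ j, (Υp * Pm) k j * G j 0 = -w * ∑ i, G i 0 / (lam k - s i) := by
      rw [Finset.mul_sum]
      refine Finset.sum_congr rfl fun j _ => ?_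
      rw [hk j]; ring
    rw [e2] at e
    apply mul_left_cancel₀ hw0
    linear_combination -e
  · ext i j
    have e := congrFun (congrFun hlin (Sum.inr i)) j
    simpa only [Matrix.fromRows_apply_inr] using e
end
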